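/- Let E, F be Banach spaces, τ a sub-cross norm on the algebraic tensor product E ⊙ F (τ(x ⊗ y) ≤ ‖x‖·‖y‖), and α, β strongly continuous one-parameter isometric representations on E and F respectively, such that for every t ∈ ℝ the map α_t ⊙ β_t is τ-continuous of norm ≤ 1. Let α ⊗_τ β be the induced strongly continuous one-parameter representation on the completion E ⊗_τ F. Then for every z ∈ ℂ, the algebraic tensor product operator α_z ⊙ β_z is closable and its closure equals (α ⊗_τ β)_z. Moreover, if C is a core for α_z and D a core for β_z, then C ⊙ D is a core for (α ⊗_τ β)_z. -/

import Mathlib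

open Complex MeasureTheory Filter Topology Set

noncomputable section

/-- The closed horizontal strip between the real axis and the line `Im = z.im`. -/
def hStrip (z : ℂ) : Set ℂ := {y : ℂ | y.im ∈ Set.uIcc 0 z.im}

/-- A strongly continuous one-parameter (contractive, hence isometric) representation. -/
structure IsOneParamRep {E : Type*} [NormedAddCommGroup E] [NormedSpace ℂ E]
    (α : ℝ → E →L[ℂ] E) : Prop where
  map_add : ∀ s t : ℝ, α (s + t) = (α s).comp (α t)
  map_zero : α 0 = ContinuousLinearMap.id ℂ E
  norm_le : ∀ t : ℝ, ‖α t‖ ≤ 1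
  strong_cont : ∀ a : E, Continuous fun t : ℝ => α t a

/-- `(a, b)` lies in the graph of the analytic continuation `α_z`:  there is a function `f`,
continuous on the strip `S(z)`, analytic in its interior, agreeing with `t ↦ α_t a` on `ℝ`,
with `f z = b`. -/
def HasContVal {E : Type*} [NormedAddCommGroup E] [NormedSpace ℂ E]
    (α : ℝ → E →L[ℂ] E) (z : ℂ) (a b : E) : Prop :=
  ∃ f : ℂ → E, ContinuousOn f (hStrip z) ∧
    DifferentiableOn ℂ f (interior (hStrip z)) ∧
    (∀ t : ℝ, f t = α t a) ∧ f z = b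

/-!
By uniqueness of analytic continuation the extension of an orbit to a strip is unique, and by the
three lines theorem it is bounded there by its values on the two boundary orbits; hence the graph of
`α_z` is closed. Averaging over a Gaussian makes every orbit entire and stays inside a closed
invariant subspace, so a closed invariant subspace of the graph with dense domain is the whole
graph. Products of continuations are continuations, so tensors of points of the graphs of `α_z` and
`β_z` span a subspace of the graph of `(α ⊗ β)_z`; it is invariant and, since `α_z` and `β_z` are
densely defined, it has dense domain.
-/

section Uniqueness

open scoped Interval

variable {E : Type*} [NormedAddCommGroup E] [NormedSpace ℂ E]

theorem integral_boundary_rect_eq_zero_of_differentiableOn_im_ne {f : ℂ → E} {c : ℝ} (z w : ℂ)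
    (hc : ContinuousOn f ([[z.re, w.re]] ×ℂ [[z.im, w.im]]))
    (hd : DifferentiableOn ℂ f ([[z.re, w.re]] ×ℂ [[z.im, w.im]] ∩ {y | y.im ≠ c})) :
    (∫ x : ℝ in z.re..w.re, f (x + z.im * I)) - (∫ x : ℝ in z.re..w.re, f (x + w.im * I)) +
      I • (∫ y : ℝ in z.im..w.im, f (w.re + y * I)) -
      I • (∫ y : ℝ in z.im..w.im, f (z.re + y * I)) = 0 := by
  have hrect : ∀ a ∈ [[z.im, w.im]], ∀ b ∈ [[z.im, w.im]], c ∉ Ioo (min a b) (max a b) →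
      (∫ x : ℝ in z.re..w.re, f (x + a * I)) - (∫ x : ℝ in z.re..w.re, f (x + b * I)) +
        I • (∫ y : ℝ in a..b, f (w.re + y * I)) -
        I • (∫ y : ℝ in a..b, f (z.re + y * I)) = 0 := by
    intro a ha b hb hcab
    have hab := uIcc_subset_uIcc ha hb
    have hsub : Ioo (min z.re w.re) (max z.re w.re) ×ℂ Ioo (min a b) (max a b) ⊆
        [[z.re, w.re]] ×ℂ [[z.im, w.im]] ∩ {y | y.im ≠ c} := fun y hy =>
      ⟨⟨Ioo_subset_Icc_self hy.1, hab (Ioo_subset_Icc_self hy.2)⟩, fun h => hcab (h ▸ hy.2)⟩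
    simpa using integral_boundary_rect_eq_zero_of_continuousOn_of_differentiableOn f
      (z.re + a * I) (w.re + b * I)
      (hc.mono <| by simpa using reProdIm_subset_iff.2 (prod_mono_right hab))
      (hd.mono <| by simpa using hsub)
  have hvert : ∀ x ∈ [[z.re, w.re]], ∀ a ∈ [[z.im, w.im]], ∀ b ∈ [[z.im, w.im]],
      IntervalIntegrable (fun y : ℝ => f (x + y * I)) volume a b := by
    intro x hx a ha b hb
    refine (hc.comp (by fun_prop) fun y hy => ?_).intervalIntegrable
    exact ⟨by simpa using hx, uIcc_subset_uIcc ha hb (by simpa using hy)⟩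
  -- The point of the segment closest to `c`: neither half of the rectangle meets `im = c`.
  obtain ⟨m, hm, hzm, hmw⟩ : ∃ m ∈ [[z.im, w.im]],
      c ∉ Ioo (min z.im m) (max z.im m) ∧ c ∉ Ioo (min m w.im) (max m w.im) :=
    ⟨max (min z.im w.im) (min (max z.im w.im) c), by grind [mem_uIcc], by grind, by grind⟩
  have hadd (x : ℝ) (hx : x ∈ [[z.re, w.re]]) :=
    intervalIntegral.integral_add_adjacent_intervals
      (hvert x hx _ left_mem_uIcc m hm) (hvert x hx m hm _ right_mem_uIcc)
  rw [← hadd _ left_mem_uIcc, ← hadd _ right_mem_uIcc, smul_add, smul_add]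
  linear_combination (norm := module)
    hrect _ left_mem_uIcc m hm hzm + hrect m hm _ right_mem_uIcc hmw

variable [CompleteSpace E]

theorem differentiableOn_of_continuousOn_of_differentiableOn_im_ne {f : ℂ → E} {U : Set ℂ} {c : ℝ}
    (hU : IsOpen U) (hc : ContinuousOn f U) (hd : DifferentiableOn ℂ f (U ∩ {y | y.im ≠ c})) :
    DifferentiableOn ℂ f U := by
  refine (isConservativeOn_and_continuousOn_iff_isDifferentiableOn hU).1 ⟨fun z w hzw => ?_, hc⟩
  rw [← add_eq_zero_iff_eq_neg, wedgeIntegral_add_wedgeIntegral_eq]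
  exact integral_boundary_rect_eq_zero_of_differentiableOn_im_ne z w (hc.mono hzw)
    (hd.mono (inter_subset_inter_left _ hzw))

theorem hStrip_eq_preimage (z : ℂ) : hStrip z = im ⁻¹' Icc (min 0 z.im) (max 0 z.im) := rfl

theorem interior_hStrip (z : ℂ) :
    interior (hStrip z) = im ⁻¹' Ioo (min 0 z.im) (max 0 z.im) := by
  rw [hStrip_eq_preimage, Complex.interior_preimage_im, interior_Icc]

theorem mem_interior_hStrip {y z : ℂ} :
    y ∈ interior (hStrip z) ↔ 0 < y.im * z.im ∧ y.im * z.im < z.im * z.im := by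
  rw [interior_hStrip, mem_preimage, mem_Ioo]
  rcases lt_trichotomy z.im 0 with hz | hz | hz
  · have hneg := mul_lt_mul_right_of_neg (a := 0) (b := y.im) hz
    rw [zero_mul] at hneg
    rw [min_eq_right hz.le, max_eq_left hz.le, mul_lt_mul_right_of_neg hz, hneg, and_comm]
  · simpa [hz] using le_of_lt
  · simp [hz, hz.le]

theorem ofReal_mem_hStrip (z : ℂ) (t : ℝ) : (t : ℂ) ∈ hStrip z := by
  simp [hStrip]

theorem self_mem_hStrip (z : ℂ) : z ∈ hStrip z := by
  simp [hStrip]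

theorem hStrip_subset_closure_interior {z : ℂ} (hz : z.im ≠ 0) :
    hStrip z ⊆ closure (interior (hStrip z)) := by
  have h : min 0 z.im ≠ max 0 z.im := by grind
  rw [interior_hStrip, Complex.closure_preimage_im, closure_Ioo h, hStrip_eq_preimage]

/-- Since `f` vanishes on the real axis, its extension by zero across the axis is continuous. -/
theorem differentiableOn_ite_im_mul_im_pos {f : ℂ → E} {z : ℂ} (hz : z.im ≠ 0)
    (hc : ContinuousOn f (hStrip z)) (hd : DifferentiableOn ℂ f (interior (hStrip z)))
    (h0 : ∀ t : ℝ, f t = 0) :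
    DifferentiableOn ℂ (fun y => if 0 < y.im * z.im then f y else 0)
      {y | y.im * z.im < z.im * z.im} := by
  have hreal : frontier {y : ℂ | 0 < y.im * z.im} ⊆ range ofReal := fun y hy =>
    ⟨y.re, Complex.ext rfl <| by
      simpa [hz, eq_comm] using frontier_lt_subset_eq continuous_const (by fun_prop) hy⟩
  refine differentiableOn_of_continuousOn_of_differentiableOn_im_ne (c := 0)
    (isOpen_lt (by fun_prop) continuous_const) ?_ ?_
  · refine ContinuousOn.if ?_ (hc.mono ?_) continuousOn_const
    · rintro y ⟨-, hy⟩
      obtain ⟨t, rfl⟩ := hreal hy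
      exact h0 t
    · rw [closure_eq_self_union_frontier]
      rintro y ⟨hyz, hy | hy⟩
      · exact interior_subset (mem_interior_hStrip.2 ⟨hy, hyz⟩)
      · obtain ⟨t, rfl⟩ := hreal hy
        exact ofReal_mem_hStrip z t
  · refine DifferentiableOn.mono (.union_of_isOpen
      (hd.congr fun y hy => if_pos (mem_interior_hStrip.1 hy).1)
      ((differentiableOn_const 0).congr fun y hy => if_neg (not_lt_of_gt hy))
      isOpen_interior (isOpen_lt (f := fun y : ℂ => y.im * z.im) (by fun_prop)
        (continuous_const (y := 0)))) fun y hy => ?_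
    rcases (mul_ne_zero hy.2 hz).lt_or_gt with h | h
    exacts [.inr h, .inl (mem_interior_hStrip.2 ⟨h, hy.1⟩)]

theorem eqOn_hStrip_zero {f : ℂ → E} {z : ℂ} (hc : ContinuousOn f (hStrip z))
    (hd : DifferentiableOn ℂ f (interior (hStrip z))) (h0 : ∀ t : ℝ, f t = 0) :
    EqOn f 0 (hStrip z) := by
  by_cases hz : z.im = 0
  · intro y hy
    rw [show y = (y.re : ℂ) from Complex.ext rfl (by simpa [hStrip, hz] using hy), h0]
    rfl
  have hlin : IsLinearMap ℝ fun y : ℂ => y.im * z.im :=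
    (LinearMap.mulRight ℝ z.im ∘ₗ imLm).isLinear
  have hzz : 0 < z.im * z.im := mul_self_pos.2 hz
  have hvanish : EqOn (fun y => if 0 < y.im * z.im then f y else 0) 0
      {y | y.im * z.im < z.im * z.im} := by
    refine ((differentiableOn_ite_im_mul_im_pos hz hc hd h0).analyticOnNhd
      (isOpen_lt (by fun_prop) continuous_const)).eqOn_zero_of_preconnected_of_eventuallyEq_zero
      (z₀ := -(z.im * I)) (convex_halfSpace_lt hlin _).isPreconnected ?_ ?_
    · simpa using neg_lt_self hzz
    · have hnhds : {y : ℂ | y.im * z.im < 0} ∈ 𝓝 (-(z.im * I)) :=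
        (isOpen_lt (by fun_prop) continuous_const).mem_nhds (by simpa using hzz)
      filter_upwards [hnhds] with y hy
      exact if_neg hy.not_gt
  have hint : EqOn f 0 (interior (hStrip z)) := fun y hy => by
    obtain ⟨hy0, hyz⟩ := mem_interior_hStrip.1 hy
    simpa [hy0] using hvanish hyz
  exact hint.of_subset_closure hc continuousOn_const interior_subset
    (hStrip_subset_closure_interior hz)

theorem eqOn_hStrip {f g : ℂ → E} {z : ℂ}
    (hfc : ContinuousOn f (hStrip z)) (hfd : DifferentiableOn ℂ f (interior (hStrip z)))
    (hgc : ContinuousOn g (hStrip z)) (hgd : DifferentiableOn ℂ g (interior (hStrip z)))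
    (h : ∀ t : ℝ, f t = g t) : EqOn f g (hStrip z) := fun y hy =>
  sub_eq_zero.1 <| eqOn_hStrip_zero (hfc.sub hgc) (hfd.sub hgd) (by simp [h]) hy

end Uniqueness

section OrbitContinuation

/-- `f` is a continuation of the orbit `t ↦ α t a` to the strip `hStrip z`, so that
`HasContVal α z a b` says that `f z = b` for some such `f`. -/
structure IsOrbitContinuation {E : Type*} [NormedAddCommGroup E] [NormedSpace ℂ E]
    (α : ℝ → E →L[ℂ] E) (z : ℂ) (a : E) (f : ℂ → E) : Prop where
  continuousOn : ContinuousOn f (hStrip z)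
  differentiableOn : DifferentiableOn ℂ f (interior (hStrip z))
  apply_ofReal : ∀ t : ℝ, f t = α t a

variable {E F G : Type*} [NormedAddCommGroup E] [NormedSpace ℂ E] [NormedAddCommGroup F]
  [NormedSpace ℂ F] [NormedAddCommGroup G] [NormedSpace ℂ G] {α : ℝ → E →L[ℂ] E}
  {β : ℝ → F →L[ℂ] F} {γ : ℝ → G →L[ℂ] G} {z : ℂ} {a b : E} {f g : ℂ → E}

theorem hasContVal_iff :
    HasContVal α z a b ↔ ∃ f, IsOrbitContinuation α z a f ∧ f z = b :=
  ⟨fun ⟨f, hc, hd, hr, hz⟩ => ⟨f, ⟨hc, hd, hr⟩, hz⟩,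
    fun ⟨f, ⟨hc, hd, hr⟩, hz⟩ => ⟨f, hc, hd, hr, hz⟩⟩

namespace IsOneParamRep

theorem apply_add (hα : IsOneParamRep α) (s t : ℝ) (x : E) : α (s + t) x = α s (α t x) := by
  rw [hα.map_add, ContinuousLinearMap.comp_apply]

theorem apply_comm (hα : IsOneParamRep α) (s t : ℝ) (x : E) : α s (α t x) = α t (α s x) := by
  rw [← hα.apply_add, add_comm, hα.apply_add]

theorem norm_apply_le (hα : IsOneParamRep α) (t : ℝ) (x : E) : ‖α t x‖ ≤ ‖x‖ := by
  simpa using (α t).le_of_opNorm_le (hα.norm_le t) x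

end IsOneParamRep

namespace IsOrbitContinuation

theorem add (hf : IsOrbitContinuation α z a f) (hg : IsOrbitContinuation α z b g) :
    IsOrbitContinuation α z (a + b) (f + g) :=
  ⟨hf.continuousOn.add hg.continuousOn, hf.differentiableOn.add hg.differentiableOn,
    fun t => by simp [hf.apply_ofReal t, hg.apply_ofReal t]⟩

theorem const_smul (c : ℂ) (hf : IsOrbitContinuation α z a f) :
    IsOrbitContinuation α z (c • a) (c • f) :=
  ⟨hf.continuousOn.const_smul c, hf.differentiableOn.const_smul c,
    fun t => by simp [hf.apply_ofReal t]⟩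

theorem sub (hf : IsOrbitContinuation α z a f) (hg : IsOrbitContinuation α z b g) :
    IsOrbitContinuation α z (a - b) (f - g) :=
  ⟨hf.continuousOn.sub hg.continuousOn, hf.differentiableOn.sub hg.differentiableOn,
    fun t => by simp [hf.apply_ofReal t, hg.apply_ofReal t]⟩

theorem map (T : E →L[ℂ] F) (hT : ∀ t x, T (α t x) = β t (T x))
    (hf : IsOrbitContinuation α z a f) : IsOrbitContinuation β z (T a) (fun y => T (f y)) :=
  ⟨T.continuous.comp_continuousOn hf.continuousOn,
    T.differentiable.comp_differentiableOn hf.differentiableOn,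
    fun t => by rw [hf.apply_ofReal, hT]⟩

theorem map₂ (B : E →L[ℂ] F →L[ℂ] G) (hB : ∀ t x y, γ t (B x y) = B (α t x) (β t y))
    {b : F} {g : ℂ → F} (hf : IsOrbitContinuation α z a f) (hg : IsOrbitContinuation β z b g) :
    IsOrbitContinuation γ z (B a b) (fun y => B (f y) (g y)) :=
  ⟨(B.continuous.comp_continuousOn hf.continuousOn).clm_apply hg.continuousOn,
    (B.differentiable.comp_differentiableOn hf.differentiableOn).clm_apply hg.differentiableOn,
    fun t => by simp [hB, hf.apply_ofReal t, hg.apply_ofReal t]⟩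

variable [CompleteSpace E]

theorem eqOn (hf : IsOrbitContinuation α z a f) (hg : IsOrbitContinuation α z a g) :
    EqOn f g (hStrip z) :=
  eqOn_hStrip hf.continuousOn hf.differentiableOn hg.continuousOn hg.differentiableOn
    fun t => by rw [hf.apply_ofReal, hg.apply_ofReal]

theorem apply_add_ofReal (hα : IsOneParamRep α) (hf : IsOrbitContinuation α z a f) (t : ℝ)
    {y : ℂ} (hy : y ∈ hStrip z) : f (y + t) = α t (f y) := by
  have hshift : IsOrbitContinuation α z (α t a) (fun y => f (y + t)) := by
    refine ⟨hf.continuousOn.comp (by fun_prop) fun y hy => ?_,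
      hf.differentiableOn.comp (by fun_prop) fun y hy => ?_, fun s => ?_⟩
    · simpa [hStrip] using hy
    · simpa [interior_hStrip] using hy
    · rw [← Complex.ofReal_add, hf.apply_ofReal, hα.apply_add]
  exact hshift.eqOn (hf.map (α t) fun s x => hα.apply_comm t s x) hy

theorem norm_apply_le_of_im_eq (hα : IsOneParamRep α) (hf : IsOrbitContinuation α z a f)
    {y w : ℂ} (hw : w ∈ hStrip z) (h : y.im = w.im) : ‖f y‖ ≤ ‖f w‖ := by
  have hy : y = w + ((y.re - w.re : ℝ) : ℂ) := Complex.ext (by simp) (by simp [h])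
  rw [hy, hf.apply_add_ofReal hα _ hw]
  exact hα.norm_apply_le _ _

theorem exists_norm_le (hα : IsOneParamRep α) (hf : IsOrbitContinuation α z a f) :
    ∃ M, ∀ y ∈ hStrip z, ‖f y‖ ≤ M := by
  have hcont : ContinuousOn (fun s : ℝ => f (s * I)) (uIcc 0 z.im) :=
    hf.continuousOn.comp (by fun_prop) fun s hs => by simpa [hStrip] using hs
  obtain ⟨M, hM⟩ := isCompact_uIcc.exists_bound_of_continuousOn hcont
  refine ⟨M, fun y hy => (hf.norm_apply_le_of_im_eq hα (w := y.im * I) ?_ ?_).trans (hM _ hy)⟩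
  · simpa [hStrip] using hy
  · simp

/-- The three lines theorem: `f` is bounded on the strip, so its maximum is approached on the
boundary lines, and these are orbits of `a` and of `f z`. -/
theorem norm_le (hα : IsOneParamRep α) (hf : IsOrbitContinuation α z a f) {y : ℂ}
    (hy : y ∈ hStrip z) : ‖f y‖ ≤ max ‖a‖ ‖f z‖ := by
  have hboundary : ∀ w : ℂ, w.im = 0 ∨ w.im = z.im → ‖f w‖ ≤ max ‖a‖ ‖f z‖ := by
    rintro w (hw | hw)
    · rw [show w = (w.re : ℂ) from Complex.ext rfl (by simpa using hw), hf.apply_ofReal]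
      exact (hα.norm_apply_le _ _).trans (le_max_left _ _)
    · exact (hf.norm_apply_le_of_im_eq hα (self_mem_hStrip z) hw).trans (le_max_right _ _)
  by_cases hz : z.im = 0
  · exact hboundary y (.inl (by simpa [hStrip, hz] using hy))
  obtain ⟨M, hM⟩ := hf.exists_norm_le hα
  have hcl : DiffContOnCl ℂ f (im ⁻¹' Ioo (min 0 z.im) (max 0 z.im)) := by
    refine ⟨interior_hStrip z ▸ hf.differentiableOn, hf.continuousOn.mono ?_⟩
    rw [Complex.closure_preimage_im, hStrip_eq_preimage]
    exact preimage_mono (closure_minimal Ioo_subset_Icc_self isClosed_Icc)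
  refine PhragmenLindelof.horizontal_strip hcl ⟨0, ?_, 0, .of_bound M ?_⟩ (fun w hw => ?_)
    (fun w hw => ?_) hy.1 hy.2
  · exact div_pos Real.pi_pos (sub_pos.2 (by grind))
  · refine mem_inf_of_right fun w hw => ?_
    simpa using hM w ⟨hw.1.le, hw.2.le⟩
  · exact hboundary w (hw ▸ min_choice 0 z.im)
  · exact hboundary w (hw ▸ max_choice 0 z.im)

theorem of_tendstoUniformlyOn {ι : Type*} {l : Filter ι} [l.NeBot] {a : ι → E} {f : ι → ℂ → E}
    {a' : E} {f' : ℂ → E} (hf : ∀ i, IsOrbitContinuation α z (a i) (f i))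
    (ha : Tendsto a l (𝓝 a')) (hlim : TendstoUniformlyOn f f' l (hStrip z)) :
    IsOrbitContinuation α z a' f' where
  continuousOn := hlim.continuousOn (.of_forall fun i => (hf i).continuousOn)
  differentiableOn := (hlim.mono interior_subset).tendstoLocallyUniformlyOn.differentiableOn
    (.of_forall fun i => (hf i).differentiableOn) isOpen_interior
  apply_ofReal t := by
    refine tendsto_nhds_unique (hlim.tendsto_at (ofReal_mem_hStrip z t)) ?_
    simpa only [(hf _).apply_ofReal] using! ((α t).continuous.tendsto a').comp ha

end IsOrbitContinuation

theorem HasContVal.apply (hα : IsOneParamRep α) (h : HasContVal α z a b) (t : ℝ) :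
    HasContVal α z (α t a) (α t b) := by
  obtain ⟨f, hf, rfl⟩ := hasContVal_iff.1 h
  exact hasContVal_iff.2 ⟨_, hf.map (α t) fun s x => hα.apply_comm t s x, rfl⟩

theorem HasContVal.map₂ (B : E →L[ℂ] F →L[ℂ] G) (hB : ∀ t x y, γ t (B x y) = B (α t x) (β t y))
    {c d : F} (hab : HasContVal α z a b) (hcd : HasContVal β z c d) :
    HasContVal γ z (B a c) (B b d) := by
  obtain ⟨f, hf, rfl⟩ := hasContVal_iff.1 hab
  obtain ⟨g, hg, rfl⟩ := hasContVal_iff.1 hcd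
  exact hasContVal_iff.2 ⟨_, hf.map₂ B hB hg, rfl⟩

/-- The graph of the operator `α_z`, as a linear subspace. -/
def continuationGraph (α : ℝ → E →L[ℂ] E) (z : ℂ) : Submodule ℂ (E × E) where
  carrier := {p | HasContVal α z p.1 p.2}
  add_mem' {p q} hp hq := by
    obtain ⟨f, hf, hfz⟩ := hasContVal_iff.1 hp
    obtain ⟨g, hg, hgz⟩ := hasContVal_iff.1 hq
    exact hasContVal_iff.2 ⟨f + g, hf.add hg, by simp [hfz, hgz]⟩
  zero_mem' := ⟨0, continuousOn_const, differentiableOn_const 0, by simp, rfl⟩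
  smul_mem' c p hp := by
    obtain ⟨f, hf, hfz⟩ := hasContVal_iff.1 hp
    exact hasContVal_iff.2 ⟨c • f, hf.const_smul c, by simp [hfz]⟩

theorem IsOneParamRep.isClosed_continuationGraph [CompleteSpace E] (hα : IsOneParamRep α) (z : ℂ) :
    IsClosed (continuationGraph α z : Set (E × E)) := by
  refine IsSeqClosed.isClosed fun p q hp hpq => ?_
  choose f hf hfz using fun n => hasContVal_iff.1 (hp n)
  have hdist : ∀ m n, ∀ y ∈ hStrip z, dist (f m y) (f n y) ≤ dist (p m) (p n) := by
    intro m n y hy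
    simpa [dist_eq_norm, Prod.norm_def, hfz] using ((hf m).sub (hf n)).norm_le hα hy
  have hcau : UniformCauchySeqOn f atTop (hStrip z) := by
    refine Metric.uniformCauchySeqOn_iff.2 fun ε hε => ?_
    obtain ⟨N, hN⟩ := Metric.cauchySeq_iff.1 hpq.cauchySeq ε hε
    exact ⟨N, fun m hm n hn y hy => (hdist m n y hy).trans_lt (hN m hm n hn)⟩
  have hlim := hcau.tendstoUniformlyOn_of_tendsto (f := fun y => limUnder atTop fun n => f n y)
    fun y hy => (hcau.cauchySeq hy).tendsto_limUnder
  refine hasContVal_iff.2 ⟨_, .of_tendstoUniformlyOn hf hpq.fst_nhds hlim, ?_⟩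
  refine tendsto_nhds_unique (hlim.tendsto_at (self_mem_hStrip z)) ?_
  simpa only [hfz] using hpq.snd_nhds

end OrbitContinuation

section GaussianSmearing

open ProbabilityTheory

open scoped NNReal

variable {E : Type*} [NormedAddCommGroup E] [NormedSpace ℂ E]

theorem differentiableAt_integral_cexp_mul_smul {Ω : Type*} {mΩ : MeasurableSpace Ω}
    {μ : Measure Ω} {X : Ω → ℝ} {g : Ω → E} {w : ℂ} {M : ℝ}
    (hw : w.re ∈ interior (integrableExpSet X μ)) (hg : AEStronglyMeasurable g μ)
    (hM : ∀ ω, ‖g ω‖ ≤ M) :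
    DifferentiableAt ℂ (fun w : ℂ => ∫ ω, cexp (w * X ω) • g ω ∂μ) w := by
  have hX : AEMeasurable X μ := aemeasurable_of_mem_interior_integrableExpSet hw
  obtain ⟨l, u, hlu, hsub⟩ :=
    mem_nhds_iff_exists_Ioo_subset.1 (mem_interior_iff_mem_nhds.1 hw)
  set t := ((w.re - l) ⊓ (u - w.re)) / 2
  have ht : 0 < t := half_pos (lt_min (sub_pos.2 hlu.1) (sub_pos.2 hlu.2))
  refine (hasDerivAt_integral_of_dominated_loc_of_deriv_le (Metric.ball_mem_nhds w (half_pos ht))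
    (F' := fun w ω => (cexp (w * X ω) * X ω) • g ω)
    (bound := fun ω => |X ω| ^ 1 * Real.exp (w.re * X ω + t / 2 * |X ω|) * M)
    (.of_forall fun w => ?_) ?_ ?_ (.of_forall fun ω y hy => ?_) ?_
    (.of_forall fun ω y _ => ?_)).2.differentiableAt
  · exact AEStronglyMeasurable.smul (by fun_prop) hg
  · exact (integrable_cexp_mul_of_re_mem_integrableExpSet hX (interior_subset hw)).smul_bdd M hg
      (.of_forall hM)
  · exact AEStronglyMeasurable.smul (by fun_prop) hg
  · have hre : y.re * X ω ≤ w.re * X ω + t / 2 * |X ω| := by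
      have hyw : |y.re - w.re| ≤ t / 2 := by
        rw [Metric.mem_ball, dist_eq_norm] at hy
        exact (abs_re_le_norm (y - w)).trans hy.le
      calc y.re * X ω = w.re * X ω + (y.re - w.re) * X ω := by ring
        _ ≤ w.re * X ω + |y.re - w.re| * |X ω| := by
          rw [← abs_mul]
          gcongr
          exact le_abs_self _
        _ ≤ w.re * X ω + t / 2 * |X ω| := by gcongr
    rw [norm_smul, norm_mul, Complex.norm_exp, re_mul_ofReal, norm_real, Real.norm_eq_abs, pow_one,
      mul_comm (Real.exp _)]
    exact mul_le_mul (by gcongr) (hM ω) (norm_nonneg _) (by positivity)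
  · refine (integrable_pow_abs_mul_exp_add_of_integrable_exp_mul (t := t)
      (hsub (add_half_inf_sub_mem_Ioo hlu)) (hsub (sub_half_inf_sub_mem_Ioo hlu)) (by positivity)
      ?_ 1).mul_const M
    exact (half_lt_self ht).trans_le (le_abs_self t)
  · have hexp : HasDerivAt (fun w : ℂ => cexp (w * X ω)) (cexp (y * X ω) * X ω) y := by
      simpa using ((hasDerivAt_id y).mul_const (X ω : ℂ)).cexp
    exact hexp.smul_const (g ω)

/-- The density of the Gaussian measure of mean `w` and variance `v` with respect to the centred
one, as an entire function of `w`; it is constantly `1` when `v = 0`. -/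
def gaussianKernel (v : ℝ≥0) (w : ℂ) (t : ℝ) : ℂ :=
  cexp (-w ^ 2 / (2 * v)) * cexp (w / v * t)

theorem gaussianKernel_zero (v : ℝ≥0) : gaussianKernel v 0 = 1 := by
  ext t
  simp [gaussianKernel]

theorem integrable_gaussianKernel (v : ℝ≥0) (w : ℂ) :
    Integrable (gaussianKernel v w) (gaussianReal 0 v) := by
  refine (integrable_cexp_mul_of_re_mem_integrableExpSet (X := id) aemeasurable_id ?_).const_mul _
  simp [integrableExpSet_id_gaussianReal]

theorem gaussianPDFReal_eq_gaussianKernel_mul {v : ℝ≥0} (hv : v ≠ 0) (r t : ℝ) :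
    (gaussianPDFReal r v t : ℂ) = gaussianPDFReal 0 v t * gaussianKernel v r t := by
  have hv' : (v : ℂ) ≠ 0 := by simpa using hv
  simp only [gaussianPDFReal, gaussianKernel, ofReal_mul, mul_assoc, ← Complex.exp_add,
    Complex.ofReal_exp]
  push_cast
  congr 2
  field_simp
  ring

theorem integral_comp_add_gaussianReal {v : ℝ≥0} (hv : v ≠ 0) (h : ℝ → E) (r : ℝ) :
    ∫ t, h (t + r) ∂gaussianReal 0 v = ∫ t, gaussianKernel v r t • h t ∂gaussianReal 0 v := by
  calc ∫ t, h (t + r) ∂gaussianReal 0 v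
      = ∫ t, h t ∂gaussianReal r v := by
        rw [← (measurableEmbedding_addRight r).integral_map, gaussianReal_map_add_const, zero_add]
    _ = ∫ t, gaussianPDFReal r v t • h t := integral_gaussianReal_eq_integral_smul hv
    _ = ∫ t, gaussianPDFReal 0 v t • gaussianKernel v r t • h t := by
        congr with t
        rw [← Complex.coe_smul, gaussianPDFReal_eq_gaussianKernel_mul hv, mul_smul,
          Complex.coe_smul]
    _ = ∫ t, gaussianKernel v r t • h t ∂gaussianReal 0 v :=
        (integral_gaussianReal_eq_integral_smul hv).symm

theorem differentiable_integral_gaussianKernel_smul (v : ℝ≥0) {g : ℝ → E} {M : ℝ}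
    (hg : AEStronglyMeasurable g (gaussianReal 0 v)) (hM : ∀ t, ‖g t‖ ≤ M) :
    Differentiable ℂ fun w => ∫ t, gaussianKernel v w t • g t ∂gaussianReal 0 v := by
  have hexp : Differentiable ℂ fun w : ℂ => ∫ t : ℝ, cexp (w * t) • g t ∂gaussianReal 0 v :=
    fun w => differentiableAt_integral_cexp_mul_smul (X := id)
      (by simp [integrableExpSet_id_gaussianReal]) hg hM
  simp only [gaussianKernel, mul_smul, integral_smul]
  have hdiv : Differentiable ℂ fun w : ℂ => w / v := by fun_prop
  exact Differentiable.smul (by fun_prop) (hexp.comp hdiv)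

theorem tendsto_integral_gaussianReal_zero [CompleteSpace E] {h : ℝ → E} {M : ℝ}
    (hc : Continuous h) (hM : ∀ t, ‖h t‖ ≤ M) :
    Tendsto (fun v : ℝ≥0 => ∫ t, h t ∂gaussianReal 0 v) (𝓝 0) (𝓝 (h 0)) := by
  have hscale (v : ℝ≥0) :
      ∫ t, h t ∂gaussianReal 0 v = ∫ t, h (NNReal.sqrt v * t) ∂gaussianReal 0 1 := by
    have hmap : gaussianReal 0 v = (gaussianReal 0 1).map ((NNReal.sqrt v : ℝ) * ·) := by
      rw [gaussianReal_map_const_mul, mul_zero, mul_one]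
      congr 1
      exact NNReal.eq (by simp)
    rw [hmap, integral_map (by fun_prop) hc.aestronglyMeasurable]
  have hpt (t : ℝ) : Tendsto (fun v : ℝ≥0 => h (NNReal.sqrt v * t)) (𝓝 0) (𝓝 (h 0)) := by
    have : Continuous fun v : ℝ≥0 => h (NNReal.sqrt v * t) := by fun_prop
    simpa using this.tendsto 0
  simpa [hscale] using tendsto_integral_filter_of_dominated_convergence
    (μ := gaussianReal 0 1) (F := fun (v : ℝ≥0) t => h (NNReal.sqrt v * t)) (f := fun _ => h 0)
    (fun _ => M) (.of_forall fun v => by fun_prop)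
    (.of_forall fun v => .of_forall fun t => hM _) (integrable_const M) (.of_forall hpt)

variable {α : ℝ → E →L[ℂ] E} {μ : Measure ℝ} {κ : ℝ → ℂ}

namespace IsOneParamRep

theorem integrable_smul (hα : IsOneParamRep α) (hκ : Integrable κ μ) (a : E) :
    Integrable (fun t => κ t • α t a) μ :=
  hκ.smul_bdd ‖a‖ (hα.strong_cont a).aestronglyMeasurable (.of_forall fun t => hα.norm_apply_le t a)

theorem integrable_orbit [IsFiniteMeasure μ] (hα : IsOneParamRep α) (a : E) :
    Integrable (fun t => α t a) μ := by
  simpa using hα.integrable_smul (integrable_const (1 : ℂ)) a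

/-- The smeared operator `a ↦ ∫ t, κ t • α t a ∂μ`. -/
def smear (hα : IsOneParamRep α) (hκ : Integrable κ μ) : E →L[ℂ] E :=
  LinearMap.mkContinuous
    { toFun := fun a => ∫ t, κ t • α t a ∂μ
      map_add' := fun a b => by
        simp only [_root_.map_add, smul_add]
        exact integral_add (hα.integrable_smul hκ a) (hα.integrable_smul hκ b)
      map_smul' := fun c a => by
        simp only [map_smul, RingHom.id_apply, ← integral_smul]
        exact integral_congr_ae (.of_forall fun t => smul_comm _ _ _) }
    (∫ t, ‖κ t‖ ∂μ) fun a => by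
      rw [← integral_mul_const]
      refine norm_integral_le_of_norm_le (hκ.norm.mul_const _) (.of_forall fun t => ?_)
      rw [norm_smul]
      exact mul_le_mul_of_nonneg_left (hα.norm_apply_le t a) (norm_nonneg _)

theorem smear_apply (hα : IsOneParamRep α) (hκ : Integrable κ μ) (a : E) :
    hα.smear hκ a = ∫ t, κ t • α t a ∂μ := rfl

/-- The operator `a ↦ α_w (∫ t, α t a ∂γ)` for the centred Gaussian measure `γ` of variance `v`,
obtained by moving the shift by `w` from the orbit to the density. -/
def gaussianSmear (hα : IsOneParamRep α) (v : ℝ≥0) (w : ℂ) : E →L[ℂ] E :=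
  hα.smear (integrable_gaussianKernel v w)

theorem gaussianSmear_apply (hα : IsOneParamRep α) (v : ℝ≥0) (w : ℂ) (a : E) :
    hα.gaussianSmear v w a = ∫ t, gaussianKernel v w t • α t a ∂gaussianReal 0 v := rfl

theorem gaussianSmear_zero_apply (hα : IsOneParamRep α) (v : ℝ≥0) (a : E) :
    hα.gaussianSmear v 0 a = ∫ t, α t a ∂gaussianReal 0 v := by
  simp [gaussianSmear_apply, gaussianKernel_zero]

variable [CompleteSpace E]

theorem smear_comm (hα : IsOneParamRep α) (hκ : Integrable κ μ) (t : ℝ) (a : E) :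
    hα.smear hκ (α t a) = α t (hα.smear hκ a) := by
  rw [smear_apply, smear_apply, ← (α t).integral_comp_comm (hα.integrable_smul hκ a)]
  simp only [map_smul, hα.apply_comm t]

theorem isOrbitContinuation_gaussianSmear (hα : IsOneParamRep α) (z : ℂ) {v : ℝ≥0} (hv : v ≠ 0)
    (a : E) :
    IsOrbitContinuation α z (hα.gaussianSmear v 0 a) (fun w => hα.gaussianSmear v w a) := by
  have hdiff : Differentiable ℂ fun w => hα.gaussianSmear v w a :=
    differentiable_integral_gaussianKernel_smul v (hα.strong_cont a).aestronglyMeasurable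
      fun t => hα.norm_apply_le t a
  refine ⟨hdiff.continuous.continuousOn, hdiff.differentiableOn, fun r => ?_⟩
  rw [gaussianSmear_apply, ← integral_comp_add_gaussianReal hv, gaussianSmear_zero_apply,
    ← (α r).integral_comp_comm (hα.integrable_orbit a)]
  simp only [add_comm _ r, hα.apply_add]

theorem tendsto_gaussianSmear_zero (hα : IsOneParamRep α) (a : E) :
    Tendsto (fun v => hα.gaussianSmear v 0 a) (𝓝[≠] 0) (𝓝 a) := by
  have h := tendsto_integral_gaussianReal_zero (hα.strong_cont a) fun t => hα.norm_apply_le t a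
  simp only [hα.gaussianSmear_zero_apply]
  simpa [hα.map_zero] using h.mono_left nhdsWithin_le_nhds

theorem dense_map_fst_continuationGraph (hα : IsOneParamRep α) (z : ℂ) :
    Dense ((continuationGraph α z).map (LinearMap.fst ℂ E E) : Set E) := fun a =>
  mem_closure_of_tendsto (hα.tendsto_gaussianSmear_zero a) <|
    eventually_mem_nhdsWithin.mono fun v hv =>
      ⟨(hα.gaussianSmear v 0 a, hα.gaussianSmear v z a),
        hasContVal_iff.2 ⟨_, hα.isOrbitContinuation_gaussianSmear z hv a, rfl⟩, rfl⟩

theorem gaussianSmear_fst_eq_of_mem_continuationGraph (hα : IsOneParamRep α) {z : ℂ} {v : ℝ≥0}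
    (hv : v ≠ 0) {p : E × E} (hp : p ∈ continuationGraph α z) :
    hα.gaussianSmear v z p.1 = hα.gaussianSmear v 0 p.2 := by
  obtain ⟨f, hf, hfz⟩ := hasContVal_iff.1 hp
  rw [← hfz]
  exact (hα.isOrbitContinuation_gaussianSmear z hv p.1).eqOn
    (hf.map (hα.gaussianSmear v 0) fun t x => hα.smear_comm _ t x) (self_mem_hStrip z)

variable {z : ℂ} {K : Submodule ℂ (E × E)}

theorem gaussianSmear_zero_mem (hα : IsOneParamRep α) (hclosed : IsClosed (K : Set (E × E)))
    (hinv : ∀ t, ∀ p ∈ K, (α t p.1, α t p.2) ∈ K) (v : ℝ≥0) {p : E × E} (hp : p ∈ K) :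
    (hα.gaussianSmear v 0 p.1, hα.gaussianSmear v 0 p.2) ∈ K := by
  rw [gaussianSmear_zero_apply, gaussianSmear_zero_apply,
    ← integral_pair (hα.integrable_orbit p.1) (hα.integrable_orbit p.2)]
  exact (K.restrictScalars ℝ).convex.integral_mem hclosed (.of_forall fun t => hinv t p hp)
    ((hα.integrable_orbit p.1).prodMk (hα.integrable_orbit p.2))

theorem eq_continuationGraph_of_invariant (hα : IsOneParamRep α) (hK : K ≤ continuationGraph α z)
    (hclosed : IsClosed (K : Set (E × E)))
    (hdense : Dense (K.map (LinearMap.fst ℂ E E) : Set E))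
    (hinv : ∀ t, ∀ p ∈ K, (α t p.1, α t p.2) ∈ K) : K = continuationGraph α z := by
  have hsmooth : ∀ v ≠ 0, ∀ x, (hα.gaussianSmear v 0 x, hα.gaussianSmear v z x) ∈ K := by
    intro v hv x
    have hcl : IsClosed {x | (hα.gaussianSmear v 0 x, hα.gaussianSmear v z x) ∈ K} :=
      hclosed.preimage (by fun_prop)
    refine hcl.closure_subset_iff.2 ?_ (hdense x)
    rintro _ ⟨p, hp, rfl⟩
    have h := hα.gaussianSmear_zero_mem hclosed hinv v hp
    rwa [← hα.gaussianSmear_fst_eq_of_mem_continuationGraph hv (hK hp)] at h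
  refine le_antisymm hK fun p hp => hclosed.mem_of_tendsto
    ((hα.tendsto_gaussianSmear_zero p.1).prodMk_nhds (hα.tendsto_gaussianSmear_zero p.2))
    (eventually_mem_nhdsWithin.mono fun v hv => ?_)
  rw [← hα.gaussianSmear_fst_eq_of_mem_continuationGraph hv hp]
  exact hsmooth v hv p.1

end IsOneParamRep

end GaussianSmearing

section TensorGraph

variable {E F G : Type*} [NormedAddCommGroup E] [NormedSpace ℂ E] [NormedAddCommGroup F]
  [NormedSpace ℂ F] [NormedAddCommGroup G] [NormedSpace ℂ G]

/-- The graph of the algebraic tensor product of two operators with graphs `R` and `S`, where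
`B x y` plays the role of `x ⊗ y`. -/
def tensorGraph (B : E →L[ℂ] F →L[ℂ] G) (R : Set (E × E)) (S : Set (F × F)) :
    Submodule ℂ (G × G) :=
  Submodule.span ℂ (image2 (fun p q => (B p.1 q.1, B p.2 q.2)) R S)

variable {B : E →L[ℂ] F →L[ℂ] G} {R : Set (E × E)} {S : Set (F × F)}

theorem apply_mem_tensorGraph {p : E × E} {q : F × F} (hp : p ∈ R) (hq : q ∈ S) :
    (B p.1 q.1, B p.2 q.2) ∈ tensorGraph B R S :=
  Submodule.subset_span (mem_image2_of_mem hp hq)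

theorem tensorGraph_le {K : Submodule ℂ (G × G)} :
    tensorGraph B R S ≤ K ↔ ∀ p ∈ R, ∀ q ∈ S, (B p.1 q.1, B p.2 q.2) ∈ K := by
  rw [tensorGraph, Submodule.span_le, image2_subset_iff]
  rfl

theorem topologicalClosure_tensorGraph_closure :
    (tensorGraph B (closure R) (closure S)).topologicalClosure =
      (tensorGraph B R S).topologicalClosure := by
  refine le_antisymm ?_ (Submodule.topologicalClosure_mono ?_)
  · refine Submodule.topologicalClosure_minimal _ (tensorGraph_le.2 fun p hp q hq => ?_)
      (Submodule.isClosed_topologicalClosure _)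
    exact map_mem_closure₂ (f := fun (p : E × E) (q : F × F) => (B p.1 q.1, B p.2 q.2))
      (by fun_prop) hp hq fun p hp q hq => apply_mem_tensorGraph hp hq
  · exact tensorGraph_le.2 fun p hp q hq =>
      apply_mem_tensorGraph (subset_closure hp) (subset_closure hq)

theorem map_mem_topologicalClosure_tensorGraph {T : E →L[ℂ] E} {U : F →L[ℂ] F} {V : G →L[ℂ] G}
    (hV : ∀ x y, V (B x y) = B (T x) (U y)) (hR : ∀ p ∈ R, (T p.1, T p.2) ∈ R)
    (hS : ∀ q ∈ S, (U q.1, U q.2) ∈ S) {r : G × G}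
    (hr : r ∈ (tensorGraph B R S).topologicalClosure) :
    (V r.1, V r.2) ∈ (tensorGraph B R S).topologicalClosure := by
  have hle : tensorGraph B R S ≤ (tensorGraph B R S).comap (V.prodMap V).toLinearMap := by
    refine tensorGraph_le.2 fun p hp q hq => ?_
    simpa [hV] using apply_mem_tensorGraph (B := B) (hR p hp) (hS q hq)
  exact map_mem_closure (f := V.prodMap V) (V.prodMap V).continuous hr hle

theorem dense_map_fst_tensorGraph
    (hB : Dense (Submodule.span ℂ (range fun p : E × F => B p.1 p.2) : Set G))
    (hR : Dense (Prod.fst '' R)) (hS : Dense (Prod.fst '' S)) :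
    Dense ((tensorGraph B R S).map (LinearMap.fst ℂ G G) : Set G) := by
  have hle : Submodule.span ℂ (range fun p : E × F => B p.1 p.2) ≤
      ((tensorGraph B R S).map (LinearMap.fst ℂ G G)).topologicalClosure := by
    rw [Submodule.span_le]
    rintro _ ⟨⟨x, y⟩, rfl⟩
    refine map_mem_closure₂ (f := fun x y => B x y) (by fun_prop) (hR x) (hS y) ?_
    rintro _ ⟨p, hp, rfl⟩ _ ⟨q, hq, rfl⟩
    exact ⟨_, apply_mem_tensorGraph hp hq, rfl⟩
  exact dense_closure.1 (hB.mono hle)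

theorem tensor_product_continuation_general [CompleteSpace E] [CompleteSpace F] [CompleteSpace G]
    (hB : Dense (Submodule.span ℂ (range fun p : E × F => B p.1 p.2) : Set G))
    {α : ℝ → E →L[ℂ] E} {β : ℝ → F →L[ℂ] F} {γ : ℝ → G →L[ℂ] G}
    (hα : IsOneParamRep α) (hβ : IsOneParamRep β) (hγ : IsOneParamRep γ)
    (hγB : ∀ t x y, γ t (B x y) = B (α t x) (β t y)) {z : ℂ}
    (hR : closure R = continuationGraph α z) (hS : closure S = continuationGraph β z) :
    (tensorGraph B R S).topologicalClosure = continuationGraph γ z := by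
  rw [← topologicalClosure_tensorGraph_closure, hR, hS]
  have hdense := dense_map_fst_tensorGraph hB (hα.dense_map_fst_continuationGraph z)
    (hβ.dense_map_fst_continuationGraph z)
  refine hγ.eq_continuationGraph_of_invariant ?_ (Submodule.isClosed_topologicalClosure _)
    (hdense.mono (Submodule.map_mono (Submodule.le_topologicalClosure _))) fun t r hr => ?_
  · exact Submodule.topologicalClosure_minimal _
      (tensorGraph_le.2 fun p hp q hq => HasContVal.map₂ B hγB hp hq)
      (hγ.isClosed_continuationGraph z)
  · exact map_mem_topologicalClosure_tensorGraph (hγB t) (fun p hp => hp.apply hα t)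
      (fun q hq => hq.apply hβ t) hr

open TensorProduct

/-- A sub-cross norm `u ↦ ‖ι u‖` makes `(x, y) ↦ ι (x ⊗ₜ y)` a bounded bilinear map. -/
def subcrossBilin (ι : E ⊗[ℂ] F →ₗ[ℂ] G) (hcross : ∀ x y, ‖ι (x ⊗ₜ[ℂ] y)‖ ≤ ‖x‖ * ‖y‖) :
    E →L[ℂ] F →L[ℂ] G :=
  LinearMap.mkContinuous₂ ((TensorProduct.mk ℂ E F).compr₂ ι) 1 fun x y => by
    simpa using hcross x y

variable {ι : E ⊗[ℂ] F →ₗ[ℂ] G} (hcross : ∀ x y, ‖ι (x ⊗ₜ[ℂ] y)‖ ≤ ‖x‖ * ‖y‖)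

theorem subcrossBilin_apply (x : E) (y : F) : subcrossBilin ι hcross x y = ι (x ⊗ₜ[ℂ] y) := rfl

theorem dense_span_range_subcrossBilin (hdense : DenseRange ι) :
    Dense (Submodule.span ℂ (range fun p : E × F => subcrossBilin ι hcross p.1 p.2) : Set G) := by
  refine hdense.mono ?_
  rw [← LinearMap.coe_range, LinearMap.range_eq_map, ← TensorProduct.span_tmul_eq_top,
    Submodule.map_span]
  refine Submodule.span_mono ?_
  rintro _ ⟨_, ⟨x, y, rfl⟩, rfl⟩
  exact ⟨(x, y), rfl⟩

theorem image_span_tmul_eq_tensorGraph (α : ℝ → E →L[ℂ] E) (β : ℝ → F →L[ℂ] F) (z : ℂ)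
    (C : Set E) (D : Set F) :
    (fun p : E ⊗[ℂ] F × E ⊗[ℂ] F => (ι p.1, ι p.2)) ''
        (Submodule.span ℂ {p : E ⊗[ℂ] F × E ⊗[ℂ] F |
          ∃ a a' b b', a ∈ C ∧ b ∈ D ∧ HasContVal α z a a' ∧ HasContVal β z b b' ∧
            p = (a ⊗ₜ[ℂ] b, a' ⊗ₜ[ℂ] b')} : Set _) =
      tensorGraph (subcrossBilin ι hcross) {p | p.1 ∈ C ∧ HasContVal α z p.1 p.2}
        {q | q.1 ∈ D ∧ HasContVal β z q.1 q.2} := by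
  have hmap := Submodule.map_span (ι.prodMap ι) {p : E ⊗[ℂ] F × E ⊗[ℂ] F |
    ∃ a a' b b', a ∈ C ∧ b ∈ D ∧ HasContVal α z a a' ∧ HasContVal β z b b' ∧
      p = (a ⊗ₜ[ℂ] b, a' ⊗ₜ[ℂ] b')}
  refine congrArg SetLike.coe (hmap.trans (congrArg (Submodule.span ℂ) ?_))
  ext r
  constructor
  · rintro ⟨_, ⟨a, a', b, b', ha, hb, haa, hbb, rfl⟩, rfl⟩
    exact ⟨(a, a'), ⟨ha, haa⟩, (b, b'), ⟨hb, hbb⟩, rfl⟩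
  · rintro ⟨p, hp, q, hq, rfl⟩
    exact ⟨_, ⟨p.1, p.2, q.1, q.2, hp.1, hq.1, hp.2, hq.2, rfl⟩, rfl⟩

end TensorGraph

open TensorProduct in
/-- Tensor products of one-parameter representations.  The completion `E ⊗_τ F` is modelled by
a Banach space `G` together with an injective dense-range linear map
`ι : E ⊗ F → G` realizing the sub-cross norm `τ(u) = ‖ι u‖`.  If every `α_t ⊙ β_t` is
`τ`-contractive and `αβ` is the induced one-parameter representation on `G`, then for every
`z ∈ ℂ` the algebraic tensor product operator `α_z ⊙ β_z` is closable with closure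
`(α ⊗_τ β)_z`, and `C ⊙ D` is a core for `(α ⊗_τ β)_z` whenever `C` is a core for `α_z` and
`D` is a core for `β_z`. -/
theorem tensor_product_continuation
    {E F G : Type*} [NormedAddCommGroup E] [NormedSpace ℂ E] [CompleteSpace E]
    [NormedAddCommGroup F] [NormedSpace ℂ F] [CompleteSpace F]
    [NormedAddCommGroup G] [NormedSpace ℂ G] [CompleteSpace G]
    (ι : TensorProduct ℂ E F →ₗ[ℂ] G)
    (hinj : Function.Injective ι) (hdense : DenseRange ι)
    (hcross : ∀ (x : E) (y : F), ‖ι (x ⊗ₜ[ℂ] y)‖ ≤ ‖x‖ * ‖y‖)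
    (α : ℝ → E →L[ℂ] E) (β : ℝ → F →L[ℂ] F) (αβ : ℝ → G →L[ℂ] G)
    (hα : IsOneParamRep α) (hβ : IsOneParamRep β) (hαβ : IsOneParamRep αβ)
    (hcontr : ∀ (t : ℝ) (u : TensorProduct ℂ E F),
      ‖ι (TensorProduct.map (α t).toLinearMap (β t).toLinearMap u)‖ ≤ ‖ι u‖)
    (hext : ∀ (t : ℝ) (u : TensorProduct ℂ E F),
      αβ t (ι u) = ι (TensorProduct.map (α t).toLinearMap (β t).toLinearMap u))
    (z : ℂ) :
    (closure ((fun p : TensorProduct ℂ E F × TensorProduct ℂ E F => (ι p.1, ι p.2)) ''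
        (Submodule.span ℂ {p : TensorProduct ℂ E F × TensorProduct ℂ E F |
          ∃ a a' b b', HasContVal α z a a' ∧ HasContVal β z b b' ∧
            p = (a ⊗ₜ[ℂ] b, a' ⊗ₜ[ℂ] b')} : Set _))
      = {p : G × G | HasContVal αβ z p.1 p.2}) ∧
    ∀ (C : Set E) (D : Set F),
      closure {p : E × E | p.1 ∈ C ∧ HasContVal α z p.1 p.2}
          = {p : E × E | HasContVal α z p.1 p.2} →
      closure {p : F × F | p.1 ∈ D ∧ HasContVal β z p.1 p.2}
          = {p : F × F | HasContVal β z p.1 p.2} →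
      closure ((fun p : TensorProduct ℂ E F × TensorProduct ℂ E F => (ι p.1, ι p.2)) ''
        (Submodule.span ℂ {p : TensorProduct ℂ E F × TensorProduct ℂ E F |
          ∃ a a' b b', a ∈ C ∧ b ∈ D ∧ HasContVal α z a a' ∧ HasContVal β z b b' ∧
            p = (a ⊗ₜ[ℂ] b, a' ⊗ₜ[ℂ] b')} : Set _))
      = {p : G × G | HasContVal αβ z p.1 p.2} := by
  have hcore (C : Set E) (D : Set F)
      (hC : closure {p : E × E | p.1 ∈ C ∧ HasContVal α z p.1 p.2} = continuationGraph α z)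
      (hD : closure {q : F × F | q.1 ∈ D ∧ HasContVal β z q.1 q.2} = continuationGraph β z) :=
    (congrArg closure (image_span_tmul_eq_tensorGraph hcross α β z C D)).trans <|
      congrArg SetLike.coe <|
        tensor_product_continuation_general (dense_span_range_subcrossBilin hcross hdense)
          hα hβ hαβ (fun t x y => by simp [subcrossBilin_apply, hext]) hC hD
  refine ⟨?_, hcore⟩
  simpa using! hcore univ univ (by simpa using! (hα.isClosed_continuationGraph z).closure_eq)
    (by simpa using! (hβ.isClosed_continuationGraph z).closure_eq)
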